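/- arXiv:2510.27258 — 2 statements merged into one kernel-verified Lean document; each statement's English description precedes it below -/
import Mathlib

section
/- Let W ∈ ℝ^{n×n} be the causally masked affinity matrix W_{i,j} = q_iᵀ k_j for j ≤ i and W_{i,j} = 0 for j > i. Then for every t ∈ {1,…,n}, the strictly causal third-order numerator satisfies Σ_{j=1}^{t} (Σ_{u=1}^{t} (W Wᵀ)_{t,u} W_{u,j}) v_jᵀ = q_tᵀ (Σ_{u=1}^{t} S^K_u (q_u q_uᵀ) P^{KV}_u), as an identity of row vectors in ℝ^{1×d_v}. -/
open Matrix Finset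

/-!
The mask cuts every sum against row `u` of `W` off at `u`. Hence, whenever `u ≤ t`,
`∑ j ≤ t, W_{u,j} vⱼᵀ = q_uᵀ P^{KV}_u` and `(W Wᵀ)_{t,u} = q_tᵀ S^K_u q_u`, and exchanging the two
sums turns the numerator into `∑ u ≤ t, (q_tᵀ S^K_u q_u) (q_uᵀ P^{KV}_u)`.
-/

section Semiring

variable {ι R d m : Type*} [Semiring R] [Fintype d] [Preorder ι]

/-- The causally masked affinity matrix of queries `q` and keys `k`. The positions are only assumed
to be preordered: `i` attends to exactly those `j` with `j ≤ i`. -/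
def maskedAffinity [DecidableLE ι] (q k : ι → d → R) : Matrix ι ι R :=
  of fun i j => if j ≤ i then q i ⬝ᵥ k j else 0

variable [LocallyFiniteOrderBot ι]

/-- The prefix summary `∑ i ≤ u, aᵢ bᵢᵀ`, with the bound `u` included: `S^K_u` is
`prefixSummary k k u` and `P^{KV}_u` is `prefixSummary k v u`. -/
def prefixSummary (a : ι → d → R) (b : ι → m → R) (u : ι) : Matrix d m R :=
  ∑ i ∈ Iic u, vecMulVec (a i) (b i)

theorem vecMul_prefixSummary (x : d → R) (a : ι → d → R) (b : ι → m → R) (u : ι) :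
    x ᵥ* prefixSummary a b u = ∑ i ∈ Iic u, (x ⬝ᵥ a i) • b i := by
  simp only [prefixSummary, vecMul_sum, vecMul_vecMulVec]

variable [DecidableLE ι]

theorem sum_maskedAffinity_smul {M : Type*} [AddCommMonoid M] [Module R M] (q k : ι → d → R)
    (x : ι → M) {u : ι} {s : Finset ι} (hs : Iic u ⊆ s) :
    ∑ j ∈ s, maskedAffinity q k u j • x j = ∑ j ∈ Iic u, (q u ⬝ᵥ k j) • x j := by
  have filter_le : s.filter (· ≤ u) = Iic u := by
    ext j
    simpa using fun hj => hs (mem_Iic.2 hj)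
  simp only [maskedAffinity, of_apply, ite_smul, zero_smul, ← sum_filter, filter_le]

theorem sum_Iic_maskedAffinity_smul (q k : ι → d → R) (v : ι → m → R) {t u : ι} (hut : u ≤ t) :
    ∑ j ∈ Iic t, maskedAffinity q k u j • v j = q u ᵥ* prefixSummary k v u := by
  rw [sum_maskedAffinity_smul q k v (Iic_subset_Iic.2 hut), vecMul_prefixSummary]

end Semiring

section CommSemiring

variable {ι R d e m : Type*} [CommSemiring R] [Fintype d] [Fintype e]
  [Fintype ι] [Preorder ι] [LocallyFiniteOrderBot ι] [DecidableLE ι]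

theorem maskedAffinity_mul_transpose_apply (q k : ι → d → R) (q' k' : ι → e → R)
    {t u : ι} (hut : u ≤ t) :
    (maskedAffinity q k * (maskedAffinity q' k')ᵀ) t u
      = (q t ᵥ* prefixSummary k k' u) ⬝ᵥ q' u := by
  calc (maskedAffinity q k * (maskedAffinity q' k')ᵀ) t u
      = ∑ i, maskedAffinity q' k' u i • maskedAffinity q k t i := by
        simp only [mul_apply, transpose_apply, smul_eq_mul, mul_comm]
    _ = ∑ i ∈ Iic u, (q' u ⬝ᵥ k' i) • maskedAffinity q k t i :=
        sum_maskedAffinity_smul q' k' _ (subset_univ _)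
    _ = ∑ i ∈ Iic u, ((q t ⬝ᵥ k i) • k' i) ⬝ᵥ q' u := by
        refine sum_congr rfl fun i hi => ?_
        have hit : i ≤ t := (mem_Iic.1 hi).trans hut
        rw [maskedAffinity, of_apply, if_pos hit, smul_eq_mul, smul_dotProduct, smul_eq_mul,
          mul_comm, dotProduct_comm (q' u)]
    _ = (q t ᵥ* prefixSummary k k' u) ⬝ᵥ q' u := by
        rw [vecMul_prefixSummary, sum_dotProduct]

theorem masked_third_order_numerator_general (q k : ι → d → R) (v : ι → m → R) (t : ι) :
    ∑ j ∈ Iic t, (∑ u ∈ Iic t,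
        (maskedAffinity q k * (maskedAffinity q k)ᵀ) t u * maskedAffinity q k u j) • v j
      = q t ᵥ* ∑ u ∈ Iic t,
          prefixSummary k k u * vecMulVec (q u) (q u) * prefixSummary k v u := by
  set W := maskedAffinity q k
  calc ∑ j ∈ Iic t, (∑ u ∈ Iic t, (W * Wᵀ) t u * W u j) • v j
      = ∑ u ∈ Iic t, (W * Wᵀ) t u • ∑ j ∈ Iic t, W u j • v j := by
        simp only [sum_smul, smul_sum, mul_smul]
        exact sum_comm
    _ = ∑ u ∈ Iic t, ((q t ᵥ* prefixSummary k k u) ⬝ᵥ q u) • (q u ᵥ* prefixSummary k v u) := by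
        refine sum_congr rfl fun u hu => ?_
        have hut : u ≤ t := mem_Iic.1 hu
        rw [maskedAffinity_mul_transpose_apply q k q k hut, sum_Iic_maskedAffinity_smul q k v hut]
    _ = q t ᵥ* ∑ u ∈ Iic t,
          prefixSummary k k u * vecMulVec (q u) (q u) * prefixSummary k v u := by
        simp only [vecMul_sum, ← vecMul_vecMul, vecMul_vecMulVec, smul_vecMul]

end CommSemiring

/-- strictly causal third-order numerator identity
`Σ_{j≤t} (Σ_{u≤t} (W Wᵀ)_{t,u} W_{u,j}) vⱼᵀ = q_tᵀ (Σ_{u≤t} S^K_u (q_u q_uᵀ) P^{KV}_u)`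
as row vectors. -/
theorem masked_third_order_numerator
    (n d dv : ℕ) (q k : Fin n → Fin d → ℝ) (v : Fin n → Fin dv → ℝ)
    (W : Matrix (Fin n) (Fin n) ℝ)
    (hW : ∀ i j : Fin n, W i j = if j ≤ i then q i ⬝ᵥ k j else 0) :
    ∀ t : Fin n,
      ∑ j ∈ Iic t, (∑ u ∈ Iic t, (W * Wᵀ) t u * W u j) • v j
        = (q t) ᵥ*
            (∑ u ∈ Iic t,
              (∑ i ∈ Iic u, vecMulVec (k i) (k i)) * vecMulVec (q u) (q u)
                * (∑ i ∈ Iic u, vecMulVec (k i) (v i))) := by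
  obtain rfl : W = maskedAffinity q k := Matrix.ext hW
  exact masked_third_order_numerator_general q k v
end

section
/- Let W ∈ ℝ^{n×n} be the causally masked affinity matrix W_{i,j} = q_iᵀ k_j for j ≤ i and W_{i,j} = 0 for j > i. Then for every t ∈ {1,…,n}, the strictly causal third-order denominator satisfies Σ_{j=1}^{t} Σ_{u=1}^{t} (W Wᵀ)_{t,u} W_{u,j} = q_tᵀ (Σ_{u=1}^{t} S^K_u (q_u q_uᵀ) m^K_u), as an identity of real scalars. -/
open Matrix Finset

/-!
The mask truncates every sum over a row of `W` to a prefix. Hence for `u ≤ t` the entry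
`(W * Wᵀ) t u` is the value at `(q t, q u)` of the bilinear form of the prefix second moment of the
keys, and the sum of row `u` of `W` is `q u` paired with the prefix sum of the keys. The rank-one
matrix `vecMulVec (q u) (q u)` glues these two scalars into one product.
-/

section MaskedSums

variable {ι M : Type*} [Preorder ι] [LocallyFiniteOrderBot ι] [DecidableLE ι] [AddCommMonoid M]

theorem sum_ite_le_eq_sum_Iic {s : Finset ι} {u : ι} (hs : Iic u ⊆ s) (f : ι → M) :
    ∑ i ∈ s, (if i ≤ u then f i else 0) = ∑ i ∈ Iic u, f i := by
  rw [← sum_filter]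
  congr 1
  ext i
  simpa only [mem_filter, mem_Iic, and_iff_right_iff_imp] using fun hi ↦ hs (mem_Iic.mpr hi)

end MaskedSums

section RankOne

variable {ι κ μ ν R : Type*} [Fintype μ] [Fintype ν] [NonUnitalSemiring R]

theorem dotProduct_vecMulVec_mulVec (x a : μ → R) (b y : ν → R) :
    x ⬝ᵥ vecMulVec a b *ᵥ y = (x ⬝ᵥ a) * (b ⬝ᵥ y) := by
  simp only [vecMulVec_mulVec, dotProduct, Pi.smul_apply, op_smul_eq_mul, ← mul_assoc, sum_mul]

theorem dotProduct_sum_vecMulVec_mulVec (s : Finset ι) (a : ι → μ → R) (b : ι → ν → R)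
    (x : μ → R) (y : ν → R) :
    x ⬝ᵥ (∑ i ∈ s, vecMulVec (a i) (b i)) *ᵥ y = ∑ i ∈ s, (x ⬝ᵥ a i) * (b i ⬝ᵥ y) := by
  simp only [sum_mulVec, dotProduct_sum, dotProduct_vecMulVec_mulVec]

theorem dotProduct_mul_vecMulVec_mulVec [Fintype κ] (A : Matrix μ κ R) (x : μ → R) (y : κ → R)
    (z w : ν → R) :
    x ⬝ᵥ (A * vecMulVec y z) *ᵥ w = (x ⬝ᵥ A *ᵥ y) * (z ⬝ᵥ w) := by
  rw [mul_vecMulVec, dotProduct_vecMulVec_mulVec]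

end RankOne

section CausalAffinity

/-- The causally masked affinity matrix of queries `q` and keys `k`: position `i` attends exactly to
the positions `j ≤ i`. -/
def causalAffinity {ι κ R : Type*} [LE ι] [DecidableLE ι] [Fintype κ]
    [NonUnitalNonAssocSemiring R] (q k : ι → κ → R) : Matrix ι ι R :=
  of fun i j ↦ if j ≤ i then q i ⬝ᵥ k j else 0

variable {ι κ R : Type*} [Preorder ι] [LocallyFiniteOrderBot ι] [DecidableLE ι] [Fintype κ]

theorem sum_Iic_causalAffinity [NonUnitalNonAssocSemiring R] (q k : ι → κ → R) {u t : ι}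
    (hut : u ≤ t) :
    ∑ j ∈ Iic t, causalAffinity q k u j = q u ⬝ᵥ ∑ j ∈ Iic u, k j := by
  simp only [causalAffinity, of_apply]
  rw [sum_ite_le_eq_sum_Iic (Iic_subset_Iic.mpr hut), dotProduct_sum]

variable [Fintype ι] [NonUnitalCommSemiring R]

theorem causalAffinity_mul_transpose_apply (q k : ι → κ → R) {u t : ι} (hut : u ≤ t) :
    (causalAffinity q k * (causalAffinity q k)ᵀ) t u =
      q t ⬝ᵥ (∑ i ∈ Iic u, vecMulVec (k i) (k i)) *ᵥ q u := by
  have truncate (i : ι) : causalAffinity q k t i * causalAffinity q k u i =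
      if i ≤ u then (q t ⬝ᵥ k i) * (k i ⬝ᵥ q u) else 0 := by
    by_cases hiu : i ≤ u
    · simp only [causalAffinity, of_apply, hiu, hiu.trans hut, if_true, dotProduct_comm (q u)]
    · simp only [causalAffinity, of_apply, hiu, if_false, mul_zero]
  simp only [mul_apply, transpose_apply, truncate]
  rw [sum_ite_le_eq_sum_Iic (subset_univ _), dotProduct_sum_vecMulVec_mulVec]

theorem masked_third_order_denominator_general (q k : ι → κ → R) (W : Matrix ι ι R)
    (hW : ∀ i j, W i j = if j ≤ i then q i ⬝ᵥ k j else 0) (t : ι) :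
    ∑ j ∈ Iic t, ∑ u ∈ Iic t, (W * Wᵀ) t u * W u j =
      q t ⬝ᵥ ∑ u ∈ Iic t,
        ((∑ i ∈ Iic u, vecMulVec (k i) (k i)) * vecMulVec (q u) (q u)) *ᵥ ∑ i ∈ Iic u, k i := by
  obtain rfl : W = causalAffinity q k := Matrix.ext hW
  rw [sum_comm, dotProduct_sum]
  refine sum_congr rfl fun u hu ↦ ?_
  have hut : u ≤ t := mem_Iic.mp hu
  rw [← mul_sum, causalAffinity_mul_transpose_apply q k hut, sum_Iic_causalAffinity q k hut,
    dotProduct_mul_vecMulVec_mulVec]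

end CausalAffinity

/-- strictly causal third-order denominator identity
`Σ_{j≤t} Σ_{u≤t} (W Wᵀ)_{t,u} W_{u,j} = q_tᵀ (Σ_{u≤t} S^K_u (q_u q_uᵀ) m^K_u)`
as scalars. -/
theorem masked_third_order_denominator
    (n d : ℕ) (q k : Fin n → Fin d → ℝ)
    (W : Matrix (Fin n) (Fin n) ℝ)
    (hW : ∀ i j : Fin n, W i j = if j ≤ i then q i ⬝ᵥ k j else 0) :
    ∀ t : Fin n,
      ∑ j ∈ Iic t, ∑ u ∈ Iic t, (W * Wᵀ) t u * W u j
        = q t ⬝ᵥ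
            (∑ u ∈ Iic t,
              ((∑ i ∈ Iic u, vecMulVec (k i) (k i)) * vecMulVec (q u) (q u)) *ᵥ
                (∑ i ∈ Iic u, k i)) :=
  masked_third_order_denominator_general q k W hW
end
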